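/- arXiv:0708.1741 — 8 statements merged into one kernel-verified Lean document; each statement's English description precedes it below -/
import Mathlib

section
/- For any group G, the geometric realization of the nerve of INN(G) is a contractible topological space: ContractibleSpace (SSet.toTop.obj (nerve (ActionCategory G G))). (This space is a model of the total space EG of the universal G-bundle, and the statement is Segal's observation that |INN(G)| ≃ EG is contractible.) -/
open CategoryTheory

namespace INNContract

open Opposite Simplicial

noncomputable section

/-- The join coordinates `(1-u) e₀ + u t`. -/
def join {n : ℕ} (t : stdSimplex ℝ (Fin (n + 1))) (u : unitInterval) :
    stdSimplex ℝ (Fin (n + 1 + 1)) :=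
  ⟨Fin.cons (1 - (u : ℝ)) (fun i => (u : ℝ) * t i), by
    refine ⟨fun x => ?_, ?_⟩
    · refine Fin.cases ?_ (fun i => ?_) x
      · simpa using u.2.2
      · simpa using mul_nonneg u.2.1 (stdSimplex.zero_le t i)
    · rw [Fin.sum_univ_succ]
      simp [← Finset.mul_sum]⟩

lemma join_zero {n : ℕ} (t : stdSimplex ℝ (Fin (n + 1))) (u : unitInterval) :
    join t u 0 = 1 - (u : ℝ) := rfl

lemma join_succ {n : ℕ} (t : stdSimplex ℝ (Fin (n + 1))) (u : unitInterval) (i : Fin (n + 1)) :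
    join t u i.succ = (u : ℝ) * t i := rfl

lemma continuous_join {n : ℕ} :
    Continuous (fun p : stdSimplex ℝ (Fin (n + 1)) × unitInterval => join p.1 p.2) := by
  refine Continuous.subtype_mk (continuous_pi fun x => ?_) _
  refine Fin.cases ?_ (fun i => ?_) x
  · simp only [Fin.cons_zero]
    fun_prop
  · simp only [Fin.cons_succ]
    have : Continuous (fun p : stdSimplex ℝ (Fin (n + 1)) × unitInterval => p.1.1 i) :=
      (continuous_apply i).comp (continuous_subtype_val.comp continuous_fst)
    exact (continuous_subtype_val.comp continuous_snd).mul this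

/-- The cone on a monotone map. -/
def coneHom {m n : ℕ} (f : Fin (m + 1) →o Fin (n + 1)) : Fin (m + 1 + 1) →o Fin (n + 1 + 1) where
  toFun := Fin.cons 0 (fun i => (f i).succ)
  monotone' := by
    intro x y
    refine Fin.cases ?_ (fun i => ?_) x
    · intro _; simp
    · refine Fin.cases ?_ (fun j => ?_) y
      · intro h; simp at h
      · intro h
        simpa using f.monotone (by simpa using h)

lemma coneHom_zero {m n : ℕ} (f : Fin (m + 1) →o Fin (n + 1)) : coneHom f 0 = 0 := rfl

lemma coneHom_succ {m n : ℕ} (f : Fin (m + 1) →o Fin (n + 1)) (i : Fin (m + 1)) :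
    coneHom f i.succ = (f i).succ := rfl

lemma map_join {m n : ℕ} (f : Fin (m + 1) →o Fin (n + 1)) (t : stdSimplex ℝ (Fin (m + 1)))
    (u : unitInterval) :
    stdSimplex.map (coneHom f) (join t u) = join (stdSimplex.map f t) u := by
  ext j
  rw [stdSimplex.map_coe, FunOnFinite.linearMap_apply_apply, Finset.sum_filter,
    Fin.sum_univ_succ]
  refine Fin.cases ?_ (fun j => ?_) j
  · simp [coneHom_zero, coneHom_succ, join_zero]
  · simp [coneHom_zero, coneHom_succ, join_succ, (Fin.succ_ne_zero j).symm, FunOnFinite.linearMap_apply_apply,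
      Finset.sum_filter, Finset.mul_sum]

lemma join_one {n : ℕ} (t : stdSimplex ℝ (Fin (n + 1))) :
    join t 1 = stdSimplex.map Fin.succ t := by
  ext j
  rw [stdSimplex.map_coe, FunOnFinite.linearMap_apply_apply, Finset.sum_filter]
  refine Fin.cases ?_ (fun j => ?_) j
  · simp [join_zero]
  · simp [join_succ]

lemma join_zero_right {n : ℕ} (t : stdSimplex ℝ (Fin (n + 1))) :
    join t 0 = stdSimplex.map (fun _ : Fin 1 => (0 : Fin (n + 1 + 1))) (stdSimplex.vertex 0) := by
  rw [stdSimplex.map_vertex]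
  ext j
  refine Fin.cases ?_ (fun j => ?_) j
  · simp [join_zero]
  · simp [join_succ]

variable (X : SSet.{0})

/-- The characteristic map of a simplex. -/
def rho {n : SimplexCategory} (a : X.obj (op n)) :
    C(stdSimplex ℝ (Fin (n.len + 1)), SSet.toTop.obj X) :=
  TopCat.toSSetObjEquiv _ (op n) ((sSetTopAdj.unit.app X).app _ a)

lemma rho_map {n m : SimplexCategory} (f : m ⟶ n) (a : X.obj (op n))
    (z : stdSimplex ℝ (Fin (m.len + 1))) :
    rho X (X.map f.op a) z = rho X a (stdSimplex.map f z) := by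
  unfold rho
  have := ConcreteCategory.congr_hom ((sSetTopAdj.unit.app X).naturality f.op) a
  rw [ConcreteCategory.comp_apply, ConcreteCategory.comp_apply] at this
  exact (congrArg (fun w => TopCat.toSSetObjEquiv _ (op m) w z) this).trans rfl

/-- A cone structure on a simplicial set. -/
structure Cone where
  c : ∀ {n : SimplexCategory}, X.obj (op n) → X.obj (op ⦋n.len + 1⦌)
  pt : X.obj (op ⦋0⦌)
  nat : ∀ {m n : SimplexCategory} (f : m ⟶ n) (a : X.obj (op n)),
    c (X.map f.op a) =
      X.map (SimplexCategory.mkHom (coneHom f.toOrderHom)).op (c a)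
  succ : ∀ {n : SimplexCategory} (a : X.obj (op n)),
    X.map (SimplexCategory.mkHom (n := n.len) (m := n.len + 1)
      (Fin.succOrderEmb _).toOrderHom).op (c a) = a
  zero : ∀ {n : SimplexCategory} (a : X.obj (op n)),
    X.map (SimplexCategory.mkHom (n := 0) (m := n.len + 1)
      ⟨fun _ => 0, fun _ _ _ => le_rfl⟩).op (c a) = pt

variable {X}

def Cone.hmap (K : Cone X) :
    X ⟶ TopCat.toSSet.obj (TopCat.of C(unitInterval, SSet.toTop.obj X)) where
  app n := ↾fun a => (TopCat.toSSetObjEquiv _ n).symm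
    (ContinuousMap.curry
      ⟨fun p => rho X (K.c (n := n.unop) a) (join p.1 p.2),
        (rho X (K.c (n := n.unop) a)).continuous.comp continuous_join⟩)
  naturality m n f := by
    ext a
    apply (TopCat.toSSetObjEquiv _ n).injective
    ext t u
    change rho X (K.c (n := n.unop) (X.map f.unop.op a)) (join t u) =
      rho X (K.c (n := m.unop) a) (join (stdSimplex.map f.unop.toOrderHom t) u)
    rw [K.nat, rho_map, ← map_join]
    rfl

def Cone.H (K : Cone X) :
    SSet.toTop.obj X ⟶ TopCat.of C(unitInterval, SSet.toTop.obj X) :=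
  (sSetTopAdj.homEquiv _ _).symm K.hmap

def ev (u : unitInterval) :
    TopCat.of C(unitInterval, SSet.toTop.obj X) ⟶ SSet.toTop.obj X :=
  TopCat.ofHom ⟨fun f => f u, continuous_eval_const u⟩

lemma hmap_ev_apply (K : Cone X) (u : unitInterval) (n : SimplexCategory)
    (a : X.obj (op n)) (t : stdSimplex ℝ (Fin (n.len + 1))) :
    TopCat.toSSetObjEquiv _ (op n) ((K.hmap ≫ TopCat.toSSet.map (ev u)).app (op n) a) t =
      rho X (K.c a) (join t u) := rfl

lemma rho_succ (K : Cone X) (n : SimplexCategory)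
    (a : X.obj (op n)) (t : stdSimplex ℝ (Fin (n.len + 1))) :
    rho X (K.c a) (join t 1) = rho X a t := by
  have h := rho_map X (SimplexCategory.mkHom (n := n.len) (m := n.len + 1)
      (Fin.succOrderEmb _).toOrderHom) (K.c a) t
  have h2 := congrArg (fun w => rho X w t) (K.succ a)
  rw [join_one]
  exact h.symm.trans h2

lemma rho_zero (K : Cone X) (n : SimplexCategory)
    (a : X.obj (op n)) (t : stdSimplex ℝ (Fin (n.len + 1))) :
    rho X (K.c a) (join t 0) = rho X K.pt (stdSimplex.vertex 0) := by
  have h := rho_map X (SimplexCategory.mkHom (n := 0) (m := n.len + 1)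
      ⟨fun _ => 0, fun _ _ _ => le_rfl⟩) (K.c a) (stdSimplex.vertex 0)
  have h2 := congrArg (fun w => rho X w (stdSimplex.vertex 0)) (K.zero a)
  rw [join_zero_right]
  exact h.symm.trans h2

lemma toSSet_hom_ext {Y : TopCat.{0}} {f g : X ⟶ TopCat.toSSet.obj Y}
    (h : ∀ (n : SimplexCategory) (a : X.obj (op n)) (t : stdSimplex ℝ (Fin (n.len + 1))),
      TopCat.toSSetObjEquiv _ (op n) (f.app (op n) a) t =
        TopCat.toSSetObjEquiv _ (op n) (g.app (op n) a) t) : f = g := by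
  ext n a
  apply (TopCat.toSSetObjEquiv _ n).injective
  exact ContinuousMap.ext (h n.unop a)

lemma Cone.ev_one (K : Cone X) : K.H ≫ ev 1 = 𝟙 _ := by
  apply (sSetTopAdj.homEquiv _ _).injective
  rw [Adjunction.homEquiv_naturality_right, Cone.H, Equiv.apply_symm_apply,
    Adjunction.homEquiv_id]
  apply toSSet_hom_ext
  intro n a t
  exact (hmap_ev_apply K 1 n a t).trans (rho_succ K n a t)

lemma Cone.ev_zero (K : Cone X) :
    K.H ≫ ev 0 = TopCat.ofHom (ContinuousMap.const _ (rho X K.pt (stdSimplex.vertex 0))) := by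
  apply (sSetTopAdj.homEquiv _ _).injective
  rw [Adjunction.homEquiv_naturality_right, Cone.H, Equiv.apply_symm_apply,
    Adjunction.homEquiv_unit]
  apply toSSet_hom_ext
  intro n a t
  exact (hmap_ev_apply K 0 n a t).trans (rho_zero K n a t)

lemma Cone.contractible (K : Cone X) : ContractibleSpace (SSet.toTop.obj X) := by
  rw [contractible_iff_id_nullhomotopic]
  refine ⟨rho X K.pt (stdSimplex.vertex 0), ?_⟩
  refine ContinuousMap.Homotopic.symm ⟨⟨⟨fun p => K.H p.2 p.1, ?_⟩, ?_, ?_⟩⟩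
  · have h : Continuous fun p : SSet.toTop.obj X × unitInterval => K.H p.1 p.2 :=
      ContinuousMap.continuous_uncurry_of_continuous K.H.hom
    exact h.comp continuous_swap
  · intro x
    exact ConcreteCategory.congr_hom K.ev_zero x
  · intro x
    exact ConcreteCategory.congr_hom K.ev_one x

lemma functor_ext {J C : Type*} [Category J] [Category C] [∀ x y : C, Subsingleton (x ⟶ y)]
    {F G : J ⥤ C} (h : ∀ j, F.obj j = G.obj j) : F = G :=
  CategoryTheory.Functor.ext h (fun _ _ _ => Subsingleton.elim _ _)

/-- The nerve of a category with unique morphisms is a cone. -/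
def nerveCone (C : Type) [Category.{0} C] [∀ x y : C, Unique (x ⟶ y)] (pt : C) :
    Cone (nerve C) where
  c {n} a := show ComposableArrows C (n.len + 1) from
    { obj := Fin.cons pt (fun i => Functor.obj (show ComposableArrows C n.len from a) i)
      map := fun _ => default
      map_id := fun _ => Subsingleton.elim _ _
      map_comp := fun _ _ => Subsingleton.elim _ _ }
  pt := show ComposableArrows C 0 from (Functor.const _).obj pt
  nat {m n} f a := by
    refine functor_ext (J := Fin (m.len + 1 + 1)) (C := C) fun j => ?_
    refine Fin.cases ?_ (fun j => ?_) j <;> rfl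
  succ {n} a := by
    refine functor_ext (J := Fin (n.len + 1)) (C := C) fun j => ?_
    rfl
  zero {n} a := by
    refine functor_ext (J := Fin (0 + 1)) (C := C) fun j => ?_
    rfl

instance (G : Type) [Group G] (x y : ActionCategory G G) : Unique (x ⟶ y) where
  default := ⟨y.back * x.back⁻¹, by
    change (y.back * x.back⁻¹) * x.back = y.back
    simp⟩
  uniq f := by
    apply Subtype.ext
    have h : f.1 * x.back = y.back := f.2
    exact eq_mul_inv_of_mul_eq h

end

end INNContract

/-- The geometric realization of the nerve of `INN(G) = ActionCategory G G` is a
contractible topological space (Segal: `|INN(G)| ≃ EG` is contractible). -/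
theorem realization_nerve_actionCategory_contractible (G : Type) [Group G] :
    ContractibleSpace (SSet.toTop.obj (nerve (ActionCategory G G))) :=
  (INNContract.nerveCone (ActionCategory G G) ((1 : G) : ActionCategory G G)).contractible
end

section
/- Let (t : H →* G, α : G →* MulAut H) be a crossed module and let d₂ : H →* H ⋊[α] G, d₂ h = ⟨h⁻¹, t h⟩, and d₁ : H ⋊[α] G →* G, d₁ ⟨h, g⟩ = t h * g, be the mapping-cone homomorphisms. Then the sequence H → H ⋊[α] G → G is short exact: d₂ is injective, d₁ is surjective, and the range of d₂ equals the kernel of d₁. (This expresses that the mapping cone of the identity on a crossed module has trivial homology, i.e. that INN₀ of the corresponding 2-group is contractible.) -/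
/-- The mapping cone `H → H ⋊[α] G → G` of the identity on a crossed module is a short
exact sequence: `d₂` is injective, `d₁` is surjective, and `range d₂ = ker d₁`. -/
theorem mappingCone_short_exact {G H : Type*} [Group G] [Group H]
    (t : H →* G) (α : G →* MulAut H)
    (hcm1 : ∀ (g : G) (h : H), t (α g h) = g * t h * g⁻¹)
    (hcm2 : ∀ h h' : H, α (t h) h' = h * h' * h⁻¹)
    (d₂ : H →* H ⋊[α] G) (hd₂ : ∀ h : H, d₂ h = ⟨h⁻¹, t h⟩)
    (d₁ : H ⋊[α] G →* G) (hd₁ : ∀ (h : H) (g : G), d₁ ⟨h, g⟩ = t h * g) :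
    Function.Injective d₂ ∧ Function.Surjective d₁ ∧ d₂.range = d₁.ker := by
  refine ⟨?_, ?_, ?_⟩
  · intro a b hab
    rw [hd₂, hd₂] at hab
    exact inv_injective (congrArg SemidirectProduct.left hab)
  · intro g
    exact ⟨⟨1, g⟩, by rw [hd₁, map_one, one_mul]⟩
  · ext x
    obtain ⟨h, g⟩ := x
    rw [MonoidHom.mem_range, MonoidHom.mem_ker, hd₁]
    constructor
    · rintro ⟨a, ha⟩
      rw [hd₂] at ha
      have h1 : a⁻¹ = h := congrArg SemidirectProduct.left ha
      have h2 : t a = g := congrArg SemidirectProduct.right ha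
      rw [← h1, ← h2, map_inv, inv_mul_cancel]
    · intro hx
      refine ⟨h⁻¹, ?_⟩
      rw [hd₂, inv_inv, map_inv, inv_eq_of_mul_eq_one_right hx]
end

section
/- Let (t : H →* G, α : G →* MulAut H) be a crossed module, with mapping-cone maps d₁, d₂, Peiffer lifting {·,·}, and G-action on H ⋊[α] G as specified. Then the first 2-crossed-module axiom holds: for all m, m' ∈ H ⋊[α] G, d₂ {m, m'} = m * m' * m⁻¹ * ((d₁ m) • m')⁻¹. -/
/-- First 2-crossed-module axiom for the mapping cone of the identity on a crossed module:
`d₂ {m, m'} = m * m' * m⁻¹ * ((d₁ m) • m')⁻¹`. -/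
theorem mappingCone_peiffer_axiom1 {G H : Type*} [Group G] [Group H]
    (t : H →* G) (α : G →* MulAut H)
    (hcm1 : ∀ (g : G) (h : H), t (α g h) = g * t h * g⁻¹)
    (hcm2 : ∀ h h' : H, α (t h) h' = h * h' * h⁻¹)
    (d₂ : H →* H ⋊[α] G) (hd₂ : ∀ h : H, d₂ h = ⟨h⁻¹, t h⟩)
    (d₁ : H ⋊[α] G →* G) (hd₁ : ∀ (h : H) (g : G), d₁ ⟨h, g⟩ = t h * g)
    (act : G → H ⋊[α] G → H ⋊[α] G)
    (hact : ∀ (g : G) (h : H) (g' : G), act g ⟨h, g'⟩ = ⟨α g h, g * g' * g⁻¹⟩)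
    (P : H ⋊[α] G → H ⋊[α] G → H)
    (hP : ∀ (h₁ : H) (g₁ : G) (h₂ : H) (g₂ : G),
      P ⟨h₁, g₁⟩ ⟨h₂, g₂⟩ = α (g₁ * g₂ * g₁⁻¹) h₁ * h₁⁻¹) :
    ∀ m m' : H ⋊[α] G, d₂ (P m m') = m * m' * m⁻¹ * (act (d₁ m) m')⁻¹ := by
  rintro ⟨h₁, g₁⟩ ⟨h₂, g₂⟩
  rw [hP, hd₁, hact, hd₂, eq_mul_inv_iff_mul_eq]
  ext
  · simp only [SemidirectProduct.mul_left, SemidirectProduct.mul_right,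
      SemidirectProduct.inv_left]
    rw [hcm2]
    simp only [hcm2, map_mul, MulAut.mul_apply, map_inv]
    group
  · simp only [SemidirectProduct.mul_right, SemidirectProduct.inv_right]
    rw [map_mul t, hcm1, map_inv]
    group
end

section
/- Let (t : H →* G, α : G →* MulAut H) be a crossed module, with mapping-cone maps d₁, d₂ and Peiffer lifting {·,·} as specified. Then the second 2-crossed-module axiom holds: for all l, l' ∈ H, {d₂ l, d₂ l'} = l * l' * l⁻¹ * l'⁻¹ (the commutator [l, l']). -/
/-- Second 2-crossed-module axiom for the mapping cone of the identity on a crossed module: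
`{d₂ l, d₂ l'} = [l, l']`. -/
theorem mappingCone_peiffer_axiom2 {G H : Type*} [Group G] [Group H]
    (t : H →* G) (α : G →* MulAut H)
    (hcm1 : ∀ (g : G) (h : H), t (α g h) = g * t h * g⁻¹)
    (hcm2 : ∀ h h' : H, α (t h) h' = h * h' * h⁻¹)
    (d₂ : H →* H ⋊[α] G) (hd₂ : ∀ h : H, d₂ h = ⟨h⁻¹, t h⟩)
    (P : H ⋊[α] G → H ⋊[α] G → H)
    (hP : ∀ (h₁ : H) (g₁ : G) (h₂ : H) (g₂ : G),
      P ⟨h₁, g₁⟩ ⟨h₂, g₂⟩ = α (g₁ * g₂ * g₁⁻¹) h₁ * h₁⁻¹) :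
    ∀ l l' : H, P (d₂ l) (d₂ l') = l * l' * l⁻¹ * l'⁻¹ := by
  intro l l'
  rw [hd₂, hd₂, hP, ← map_inv t, ← map_mul t, ← map_mul t, hcm2]
  group
end

section
/- Let (t : H →* G, α : G →* MulAut H) be a crossed module, with mapping-cone maps d₁, d₂ and Peiffer lifting {·,·} as specified. Then the fourth 2-crossed-module axiom holds: for all h ∈ H, g ∈ G and l ∈ H, {⟨h, g⟩, d₂ l} = α g l * α (t h * g) l⁻¹, i.e. {m, d₂ l} equals the m-action on l times the inverse of the (d₁ m)-action on l. -/
/-- Fourth 2-crossed-module axiom for the mapping cone of the identity on a crossed module: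
`{⟨h, g⟩, d₂ l} = α g l * α (t h * g) l⁻¹`. -/
theorem mappingCone_peiffer_axiom4 {G H : Type*} [Group G] [Group H]
    (t : H →* G) (α : G →* MulAut H)
    (hcm1 : ∀ (g : G) (h : H), t (α g h) = g * t h * g⁻¹)
    (hcm2 : ∀ h h' : H, α (t h) h' = h * h' * h⁻¹)
    (d₂ : H →* H ⋊[α] G) (hd₂ : ∀ h : H, d₂ h = ⟨h⁻¹, t h⟩)
    (P : H ⋊[α] G → H ⋊[α] G → H)
    (hP : ∀ (h₁ : H) (g₁ : G) (h₂ : H) (g₂ : G),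
      P ⟨h₁, g₁⟩ ⟨h₂, g₂⟩ = α (g₁ * g₂ * g₁⁻¹) h₁ * h₁⁻¹) :
    ∀ (h : H) (g : G) (l : H), P ⟨h, g⟩ (d₂ l) = α g l * α (t h * g) l⁻¹ := by
  intro h g l
  rw [hd₂, hP, ← hcm1, hcm2, map_mul, MulAut.mul_apply, hcm2, map_inv]
  simp only [mul_assoc]
end

section
/- Let (t : H →* G, α : G →* MulAut H) be a crossed module, with Peiffer lifting {·,·} and G-actions as specified. Then the Peiffer lifting is G-equivariant (the fifth 2-crossed-module axiom): for all n ∈ G and m, m' ∈ H ⋊[α] G, α n ({m, m'}) = {n • m, n • m'}. -/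
/-- Fifth 2-crossed-module axiom for the mapping cone of the identity on a crossed module:
the Peiffer lifting is `G`-equivariant: `α n {m, m'} = {n • m, n • m'}`. -/
theorem mappingCone_peiffer_equivariant {G H : Type*} [Group G] [Group H]
    (t : H →* G) (α : G →* MulAut H)
    (hcm1 : ∀ (g : G) (h : H), t (α g h) = g * t h * g⁻¹)
    (hcm2 : ∀ h h' : H, α (t h) h' = h * h' * h⁻¹)
    (act : G → H ⋊[α] G → H ⋊[α] G)
    (hact : ∀ (g : G) (h : H) (g' : G), act g ⟨h, g'⟩ = ⟨α g h, g * g' * g⁻¹⟩)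
    (P : H ⋊[α] G → H ⋊[α] G → H)
    (hP : ∀ (h₁ : H) (g₁ : G) (h₂ : H) (g₂ : G),
      P ⟨h₁, g₁⟩ ⟨h₂, g₂⟩ = α (g₁ * g₂ * g₁⁻¹) h₁ * h₁⁻¹) :
    ∀ (n : G) (m m' : H ⋊[α] G), α n (P m m') = P (act n m) (act n m') := by
  rintro n ⟨h, g⟩ ⟨h', g'⟩
  rw [hact, hact, hP, hP, map_mul, map_inv, ← MulAut.mul_apply, ← MulAut.mul_apply,
    ← map_mul, ← map_mul]
  congr 3
  group
end

section
/- Let (t : H →* G, α : G →* MulAut H) be a crossed module, with mapping-cone map d₂ and Peiffer lifting {·,·} as specified. Then the action of the middle group H ⋊[α] G on H defined via the Peiffer lifting agrees with the action through the G-component: for all l ∈ H and all ⟨h, g⟩ ∈ H ⋊[α] G, l * {d₂ (l⁻¹), ⟨h, g⟩} = α g l. -/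
/-- For the mapping cone of the identity on a crossed module, the action of the middle
group `H ⋊[α] G` on `H` defined via the Peiffer lifting agrees with the action through
the `G`-component: `l * {d₂ (l⁻¹), ⟨h, g⟩} = α g l`. -/
theorem mappingCone_middle_action_agrees {G H : Type*} [Group G] [Group H]
    (t : H →* G) (α : G →* MulAut H)
    (hcm1 : ∀ (g : G) (h : H), t (α g h) = g * t h * g⁻¹)
    (hcm2 : ∀ h h' : H, α (t h) h' = h * h' * h⁻¹)
    (d₂ : H →* H ⋊[α] G) (hd₂ : ∀ h : H, d₂ h = ⟨h⁻¹, t h⟩)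
    (P : H ⋊[α] G → H ⋊[α] G → H)
    (hP : ∀ (h₁ : H) (g₁ : G) (h₂ : H) (g₂ : G),
      P ⟨h₁, g₁⟩ ⟨h₂, g₂⟩ = α (g₁ * g₂ * g₁⁻¹) h₁ * h₁⁻¹) :
    ∀ (l h : H) (g : G), l * P (d₂ l⁻¹) ⟨h, g⟩ = α g l := by
  intro l h g
  have e : (t l⁻¹)⁻¹ = t l := by simp
  rw [hd₂, hP, e, map_mul, map_mul, MulAut.mul_apply, MulAut.mul_apply, hcm2, hcm2]
  simp [mul_assoc]
end

section
/- Let C be a category and let TC be its tangent category, the disjoint union over all objects c of C of the under-categories c/C (in Lean: the Sigma category over the objects of C of the categories Under c). Then for every natural number n there is a bijection between the n-simplices of the nerve of TC and the (n+1)-simplices of the nerve of C, i.e. an equivalence ComposableArrows TC n ≃ ComposableArrows C (n + 1). (This is the object-level content of the statement that the nerve of the tangent category is the décalage of the nerve of C.) -/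
open CategoryTheory

namespace TangentDecalage

universe v u
variable {C : Type u} [Category.{v} C] {n : ℕ}

/-- Chains in a single coslice, mapped into the disjoint union. -/
def toTangent (p : Σ c : C, (ComposableArrows (Under c) n)) :
    ComposableArrows (Σ c : C, Under c) n :=
  Functor.comp p.2 (Sigma.incl (C := fun c : C => Under c) p.1)

lemma toTangent_injective : Function.Injective (toTangent (C := C) (n := n)) := by
  rintro ⟨c, G⟩ ⟨c', G'⟩ h
  have hobj : ∀ i, (⟨c, G.obj i⟩ : Σ c : C, Under c) = ⟨c', G'.obj i⟩ :=
    fun i => Functor.congr_obj h i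
  obtain rfl : c = c' := congrArg Sigma.fst (hobj 0)
  congr 1
  have ho : ∀ i, G.obj i = G'.obj i := fun i => by simpa using hobj i
  refine CategoryTheory.Functor.ext ho ?_
  intro i j f
  apply (Sigma.incl (C := fun c : C => Under c) c).map_injective
  have := Functor.congr_hom h f
  rw [Functor.map_comp, Functor.map_comp, eqToHom_map, eqToHom_map]
  exact this

lemma sigma_fst_eq {X Y : Σ c : C, Under c} (f : X ⟶ Y) : X.1 = Y.1 := by
  obtain ⟨a, x⟩ := X
  obtain ⟨b, y⟩ := Y
  obtain ⟨g⟩ := f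
  rfl

lemma toTangent_surjective : Function.Surjective (toTangent (C := C) (n := n)) := by
  intro F
  have h1 : ∀ i, ∃ X : Under (F.obj 0).1, F.obj i = ⟨(F.obj 0).1, X⟩ := by
    intro i
    have h := sigma_fst_eq (F.map (homOfLE (Fin.zero_le i)))
    generalize (F.obj 0).1 = c at h
    subst h
    exact ⟨(F.obj i).2, rfl⟩
  choose X hX using h1
  let I := Sigma.incl (C := fun c : C => Under c) (F.obj 0).1
  let G : ComposableArrows (Under (F.obj 0).1) n :=
    { obj := X
      map := fun {i j} f => I.preimage (X := X i) (Y := X j)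
        (eqToHom (hX i).symm ≫ F.map f ≫ eqToHom (hX j))
      map_id := fun i => I.map_injective (by
        rw [Functor.map_preimage, CategoryTheory.Functor.map_id, CategoryTheory.Functor.map_id,
          Category.id_comp]
        exact eqToHom_trans _ _)
      map_comp := fun f g => I.map_injective (by
        simp only [Functor.map_preimage, Functor.map_comp, Category.assoc]
        erw [eqToHom_trans_assoc]
        simp) }
  refine ⟨⟨_, G⟩, CategoryTheory.Functor.ext (fun i => (hX i).symm) ?_⟩
  intro i j f
  exact I.map_preimage _

/-- Chains in a coslice, as chains one longer in the base. -/
def toBase (p : Σ c : C, (ComposableArrows (Under c) n)) : ComposableArrows C (n + 1) :=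
  ComposableArrows.precomp (Functor.comp p.2 (Under.forget p.1)) (p.2.obj 0).hom

/-- The inverse of `toBase`. -/
def ofBase (H : ComposableArrows C (n + 1)) : Σ c : C, (ComposableArrows (Under c) n) :=
  ⟨H.obj 0,
    { obj := fun i => Under.mk (H.map (homOfLE (Fin.zero_le i.succ)))
      map := fun {i j} f => Under.homMk (H.map (homOfLE (Fin.succ_le_succ_iff.2 (leOfHom f)))) (by
        dsimp
        rw [← H.map_comp]
        rfl)
      map_id := fun i => by ext; exact H.map_id _
      map_comp := fun f g => by ext; exact H.map_comp (homOfLE _) (homOfLE _) }⟩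

lemma toBase_ofBase (H : ComposableArrows C (n + 1)) : toBase (ofBase H) = H := by
  refine ComposableArrows.ext_succ rfl rfl ?_
  erw [eqToHom_refl, eqToHom_refl, Category.id_comp, Category.comp_id]
  rfl

lemma under_hom_heq {c : C} {X X' Y Y' : Under c} (hX : X = X') (hY : Y = Y')
    (f : X ⟶ Y) (f' : X' ⟶ Y') (h : f.right ≍ f'.right) : f ≍ f' := by
  subst hX hY
  exact heq_of_eq (Under.UnderMorphism.ext (eq_of_heq h))

lemma under_functor_ext {c : C} {G G' : ComposableArrows (Under c) n}
    (ho : ∀ i, G.obj i = G'.obj i)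
    (hm : ∀ {i j : Fin (n + 1)} (f : i ⟶ j), (G.map f).right ≍ (G'.map f).right) : G = G' :=
  CategoryTheory.Functor.hext ho (fun i j f => under_hom_heq (ho i) (ho j) _ _ (hm f))

lemma ofBase_toBase (p : Σ c : C, (ComposableArrows (Under c) n)) : ofBase (toBase p) = p := by
  obtain ⟨c, G⟩ := p
  have key : ∀ i, (toBase ⟨c, G⟩).map (homOfLE (Fin.zero_le i.succ)) = (G.obj i).hom := by
    rintro ⟨_ | i, hi⟩
    · rfl
    · exact Under.w (G.map (homOfLE (Fin.zero_le _)))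
  have ho : ∀ i, (ofBase (toBase ⟨c, G⟩)).2.obj i = G.obj i := by
    intro i
    exact congrArg (fun f => Under.mk (X := c) (Y := (G.obj i).right) f) (key i)
  exact Sigma.ext rfl (heq_of_eq (under_functor_ext (c := c)
    (G := (ofBase (toBase ⟨c, G⟩)).2) (G' := G) ho (fun f => HEq.rfl)))

end TangentDecalage

/-- The `n`-simplices of the nerve of the tangent category `TC = Σ c : C, Under c` are in
bijection with the `(n+1)`-simplices of the nerve of `C` (décalage). -/
theorem tangent_category_nerve_decalage (C : Type*) [Category C] (n : ℕ) :
    Nonempty (ComposableArrows (Σ c : C, Under c) n ≃ ComposableArrows C (n + 1)) := by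
  exact ⟨(Equiv.ofBijective _ ⟨TangentDecalage.toTangent_injective,
    TangentDecalage.toTangent_surjective⟩).symm.trans
    ⟨TangentDecalage.toBase, TangentDecalage.ofBase, TangentDecalage.ofBase_toBase,
      TangentDecalage.toBase_ofBase⟩⟩
end
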